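/- Construction of harmonic Maass forms of polynomial growth with Eisenstein shadow. Let k be a negative integer, N ≥ 1 an integer, and χ a Dirichlet character mod N with χ(−1) = (−1)^k. Let ρ be a cusp of Γ₀(N), γ_ρ ∈ SL₂(ℤ) with γ_ρ(i∞) = ρ, Γ_ρ = Γ₀(N) ∩ γ_ρ Γ_∞ γ_ρ^{−1}, and assume χ is trivial on Γ_ρ. Then the series 𝓕_{k,ρ}(N,χ;τ) = Σ_{g ∈ Γ_ρ\Γ₀(N)} χ̄(g) ((v^{1−k}/(1−k))|_k γ_ρ^{−1}g)(τ) converges absolutely, defines an element of H^!_k(N,χ), and has at most polynomial growth at every cusp of Γ₀(N); more precisely, for any cusp ν of Γ₀(N) with scaling matrix γ_ν ∈ SL₂(ℤ), γ_ν(i∞) = ν, one has (𝓕_{k,ρ}(N,χ;·)|_k γ_ν)(τ) = O(δ_{ρ,ν} v^{1−k} + v^{−k/2}) as v → ∞, where δ_{ρ,ν} = 1 if ν is Γ₀(N)-equivalent to ρ and 0 otherwise. In particular 𝓕_{k,ρ}(N,χ;·) ∈ H^#_k(N,χ), and its shadow is the Eisenstein series: ξ_k(𝓕_{k,ρ}(N,χ;·))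 = E_{2−k,ρ}(N,χ̄;·). -/

import Mathlib

open Complex MeasureTheory Set Filter

noncomputable section

/-- The upper half-plane, as a subset of `ℂ`. -/
def UHP : Set ℂ := {τ : ℂ | 0 < τ.im}

/-- The weight-`k` slash operator for the matrix `(a b; c d)` (assumed of positive
determinant): `(f|_k γ)(τ) = (det γ)^(k/2) (cτ+d)^(-k) f((aτ+b)/(cτ+d))`. -/
def slash (k : ℤ) (a b c d : ℂ) (f : ℂ → ℂ) : ℂ → ℂ := fun τ =>
  (a * d - b * c) ^ ((k : ℂ) / 2) * (c * τ + d) ^ (-k) * f ((a * τ + b) / (c * τ + d))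

/-- The Fricke involution `f ↦ f|_k ω(M)` with `ω(M) = (0 -1; M 0)`. -/
def fricke (k : ℤ) (M : ℕ) (f : ℂ → ℂ) : ℂ → ℂ := slash k 0 (-1) (M : ℂ) 0 f

/-- Partial derivative in the real (`u`) direction. -/
def pdU (f : ℂ → ℂ) (τ : ℂ) : ℂ := fderiv ℝ f τ 1

/-- Partial derivative in the imaginary (`v`) direction. -/
def pdV (f : ℂ → ℂ) (τ : ℂ) : ℂ := fderiv ℝ f τ Complex.I

/-- Wirtinger derivative `∂/∂τ`. -/
def wirt (f : ℂ → ℂ) (τ : ℂ) : ℂ := (pdU f τ - Complex.I * pdV f τ) / 2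

/-- Wirtinger derivative `∂/∂τ̄`. -/
def wirtBar (f : ℂ → ℂ) (τ : ℂ) : ℂ := (pdU f τ + Complex.I * pdV f τ) / 2

/-- The weight-`k` hyperbolic Laplacian
`Δ_k = -v²(∂²/∂u² + ∂²/∂v²) + ikv(∂/∂u + i ∂/∂v)`. -/
def hypLaplacian (k : ℤ) (f : ℂ → ℂ) (τ : ℂ) : ℂ :=
  -(τ.im : ℂ) ^ 2 * (pdU (pdU f) τ + pdV (pdV f) τ)
    + Complex.I * (k : ℂ) * (τ.im : ℂ) * (pdU f τ + Complex.I * pdV f τ)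

/-- Maass raising operator `R_k = 2i ∂/∂τ + k/v`. -/
def Rop (k : ℤ) (f : ℂ → ℂ) (τ : ℂ) : ℂ :=
  2 * Complex.I * wirt f τ + (k : ℂ) / (τ.im : ℂ) * f τ

/-- Maass lowering operator `L_k = -2iv² ∂/∂τ̄`. -/
def Lop (f : ℂ → ℂ) (τ : ℂ) : ℂ := -2 * Complex.I * (τ.im : ℂ) ^ 2 * wirtBar f τ

/-- Shadow operator `ξ_k f = 2i v^k conj(∂f/∂τ̄)`. -/
def xiOp (k : ℤ) (f : ℂ → ℂ) (τ : ℂ) : ℂ :=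
  2 * Complex.I * (τ.im : ℂ) ^ k * (starRingEnd ℂ) (wirtBar f τ)

/-- The operator `D = (1/(2πi)) ∂/∂τ`. -/
def Dop (f : ℂ → ℂ) : ℂ → ℂ := fun τ => wirt f τ / (2 * Real.pi * Complex.I)

/-- Modularity: `f|_k γ = χ(d) f` for all `γ = (a b; c d) ∈ Γ₀(N)`. -/
def SlashInv (k : ℤ) (N : ℕ) (χ : DirichletCharacter ℂ N) (f : ℂ → ℂ) : Prop :=
  ∀ a b c d : ℤ, a * d - b * c = 1 → (N : ℤ) ∣ c → ∀ τ ∈ UHP,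
    slash k (a : ℂ) (b : ℂ) (c : ℂ) (d : ℂ) f τ = χ (d : ZMod N) * f τ

/-- At every cusp, `f|_k γ` grows at most linear-exponentially:
`(f|_k γ)(τ) = O(e^(εv))` as `v → ∞`. -/
def ExpGrowthAtCusps (k : ℤ) (f : ℂ → ℂ) : Prop :=
  ∀ a b c d : ℤ, a * d - b * c = 1 →
    ∃ ε > (0 : ℝ), ∃ C v₀ : ℝ, ∀ τ ∈ UHP, v₀ ≤ τ.im →
      ‖slash k (a : ℂ) (b : ℂ) (c : ℂ) (d : ℂ) f τ‖ ≤ C * Real.exp (ε * τ.im)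

/-- At every cusp, `f|_k γ` has at most polynomial growth as `v → ∞`. -/
def PolyGrowthAtCusps (k : ℤ) (f : ℂ → ℂ) : Prop :=
  ∀ a b c d : ℤ, a * d - b * c = 1 →
    ∃ A C v₀ : ℝ, ∀ τ ∈ UHP, v₀ ≤ τ.im →
      ‖slash k (a : ℂ) (b : ℂ) (c : ℂ) (d : ℂ) f τ‖ ≤ C * τ.im ^ A

/-- At every cusp, `f|_k γ` stays bounded as `v → ∞`. -/
def BoundedAtCusps (k : ℤ) (f : ℂ → ℂ) : Prop :=
  ∀ a b c d : ℤ, a * d - b * c = 1 →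
    ∃ C v₀ : ℝ, ∀ τ ∈ UHP, v₀ ≤ τ.im →
      ‖slash k (a : ℂ) (b : ℂ) (c : ℂ) (d : ℂ) f τ‖ ≤ C

/-- Harmonic Maass forms of manageable growth: the space `H^!_k(N,χ)`. -/
def IsHarmonicMaassMG (k : ℤ) (N : ℕ) (χ : DirichletCharacter ℂ N) (f : ℂ → ℂ) : Prop :=
  ContDiffOn ℝ (⊤ : ℕ∞) f UHP ∧ SlashInv k N χ f ∧ (∀ τ ∈ UHP, hypLaplacian k f τ = 0) ∧
    ExpGrowthAtCusps k f

/-- Harmonic Maass forms of polynomial growth: the space `H^#_k(N,χ)`. -/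
def IsHMFPolyGrowth (k : ℤ) (N : ℕ) (χ : DirichletCharacter ℂ N) (f : ℂ → ℂ) : Prop :=
  IsHarmonicMaassMG k N χ f ∧ PolyGrowthAtCusps k f

/-- Holomorphic modular forms of weight `k`: the space `M_k(N,χ)`. -/
def IsHolomorphicModularForm (k : ℤ) (N : ℕ) (χ : DirichletCharacter ℂ N) (f : ℂ → ℂ) : Prop :=
  DifferentiableOn ℂ f UHP ∧ SlashInv k N χ f ∧ BoundedAtCusps k f

/-- The (real) incomplete gamma function `Γ(ν, x) = ∫_x^∞ e^(-t) t^(ν-1) dt`. -/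
def incGamma (ν : ℝ) (x : ℝ) : ℝ := ∫ t in Ioi x, Real.exp (-t) * t ^ (ν - 1)

/-- The series `Σ_{n≥0} c⁺(n) qⁿ + c⁻(0) v^(1-k) + Σ_{n<0} c⁻(n) Γ(1-k, -4πnv) qⁿ`,
with `cm j` standing for `c⁻(-j)`. -/
def maassSeries (k : ℤ) (cp cm : ℕ → ℂ) : ℂ → ℂ := fun τ =>
  (∑' n : ℕ, cp n * Complex.exp (2 * Real.pi * Complex.I * n * τ))
    + cm 0 * (τ.im : ℂ) ^ (1 - k)
    + ∑' n : ℕ, cm (n + 1) * (incGamma ((1 - k : ℤ) : ℝ) (4 * Real.pi * (n + 1) * τ.im) : ℂ)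
        * Complex.exp (-(2 * Real.pi * Complex.I * (n + 1) * τ))

/-- `f` is given on `ℍ` by the harmonic-Maass-type Fourier series with
holomorphic-part coefficients `cp n = c⁺(n)` and nonholomorphic-part
coefficients `cm n = c⁻(-n)`. -/
def FourierShape (k : ℤ) (cp cm : ℕ → ℂ) (f : ℂ → ℂ) : Prop :=
  ∀ τ ∈ UHP, f τ = maassSeries k cp cm τ

/-- Coefficients bounded by `O(n^α)`. -/
def CoeffBound (α : ℝ) (c : ℕ → ℂ) : Prop :=
  ∃ C : ℝ, ∀ n : ℕ, 1 ≤ n → ‖c n‖ ≤ C * (n : ℝ) ^ α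

/-- Dirichlet series `Σ_{n≥1} c(n) n^(-s)`. -/
def LSer (c : ℕ → ℂ) (s : ℂ) : ℂ := ∑' n : ℕ, c (n + 1) / ((n : ℂ) + 1) ^ s

/-- `W_ν(s) = ∫₀^∞ Γ(ν,2x) eˣ x^(s-1) dx`. -/
def Wnu (ν : ℝ) (s : ℂ) : ℂ :=
  ∫ x in Ioi (0 : ℝ), ((incGamma ν (2 * x) * Real.exp x : ℝ) : ℂ) * (x : ℂ) ^ (s - 1)

/-- Completed `L`-function `Λ_N(f,s)` (with twisting conductor `m`; `m = 1` is
the untwisted case): `(m√N/(2π))^s [Γ(s) L⁺(s) + W_{1-k}(s) L⁻(s)]`. -/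
def LambdaN (N : ℕ) (k : ℤ) (m : ℕ) (cp cm : ℕ → ℂ) (s : ℂ) : ℂ :=
  ((m * Real.sqrt N / (2 * Real.pi) : ℝ) : ℂ) ^ s *
    (Complex.Gamma s * LSer cp s + Wnu ((1 - k : ℤ) : ℝ) s * LSer cm s)

/-- `Ξ_N(f,s) = (m√N/(2π))^s [Γ(s+1) L⁺(s) - W_{1-k}(s+1) L⁻(s)]`. -/
def XiN (N : ℕ) (k : ℤ) (m : ℕ) (cp cm : ℕ → ℂ) (s : ℂ) : ℂ :=
  ((m * Real.sqrt N / (2 * Real.pi) : ℝ) : ℂ) ^ s *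
    (Complex.Gamma (s + 1) * LSer cp s - Wnu ((1 - k : ℤ) : ℝ) (s + 1) * LSer cm s)

/-- `Ω_N(f,s) = -2 Ξ_N(f,s) + k Λ_N(f,s)`. -/
def OmegaN (N : ℕ) (k : ℤ) (m : ℕ) (cp cm : ℕ → ℂ) (s : ℂ) : ℂ :=
  -2 * XiN N k m cp cm s + (k : ℂ) * LambdaN N k m cp cm s

/-- Bounded on every vertical strip. -/
def BoundedVert (F : ℂ → ℂ) : Prop :=
  ∀ a b : ℝ, ∃ M : ℝ, ∀ s : ℂ, a ≤ s.re → s.re ≤ b → ‖F s‖ ≤ M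

/-- `N^((1-k)/2)` as a complex number. -/
def Npow (N : ℕ) (k : ℤ) : ℂ := (N : ℂ) ^ ((1 - (k : ℂ)) / 2)

/-- Pole-correction terms for `Λ*`. -/
def corrL (N : ℕ) (k : ℤ) (ι c0 d0 c0' d0' : ℂ) (s : ℂ) : ℂ :=
  c0 / s + ι * d0 / ((k : ℂ) - s) + c0' / Npow N k / (s - (k : ℂ) + 1)
    + ι * d0' / Npow N k / (1 - s)

/-- Pole-correction terms for `Ω*`. -/
def corrO (N : ℕ) (k : ℤ) (ι c0 d0 c0' d0' : ℂ) (s : ℂ) : ℂ :=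
  (k : ℂ) * (c0 / s - ι * d0 / ((k : ℂ) - s) + c0' / Npow N k / (s - (k : ℂ) + 1)
    - ι * d0' / Npow N k / (1 - s))

/-- The pole-corrected function `L + corr` agrees away from `{0, k, 1, k-1}` with an
entire function that is bounded on vertical strips. -/
def EntireBddCorrected (k : ℤ) (L corr : ℂ → ℂ) : Prop :=
  ∃ F : ℂ → ℂ, Differentiable ℂ F ∧ BoundedVert F ∧
    ∀ s : ℂ, s ≠ 0 → s ≠ (k : ℂ) → s ≠ 1 → s ≠ (k : ℂ) - 1 → F s = L s + corr s

/-- Condition (2)(a) of the main theorem: meromorphic continuation, functional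
equations, and entire pole-corrected completions bounded on vertical strips. -/
def AnalyticPackage (N : ℕ) (k : ℤ) (α : ℝ) (cfp cfm cgp cgm : ℕ → ℂ) : Prop :=
  ∃ Lf Lg Of' Og : ℂ → ℂ,
    (∀ s : ℂ, α + 1 < s.re → Lf s = LambdaN N k 1 cfp cfm s) ∧
    (∀ s : ℂ, α + 1 < s.re → Lg s = LambdaN N k 1 cgp cgm s) ∧
    (∀ s : ℂ, α + 1 < s.re → Of' s = OmegaN N k 1 cfp cfm s) ∧
    (∀ s : ℂ, α + 1 < s.re → Og s = OmegaN N k 1 cgp cgm s) ∧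
    (∀ s : ℂ, Lf s = Complex.I ^ k * Lg ((k : ℂ) - s)) ∧
    (∀ s : ℂ, Of' s = -(Complex.I ^ k) * Og ((k : ℂ) - s)) ∧
    EntireBddCorrected k Lf (corrL N k (Complex.I ^ k) (cfp 0) (cgp 0) (cfm 0) (cgm 0)) ∧
    EntireBddCorrected k Lg (corrL N k (Complex.I ^ (-k)) (cgp 0) (cfp 0) (cgm 0) (cfm 0)) ∧
    EntireBddCorrected k Of' (corrO N k (Complex.I ^ k) (cfp 0) (cgp 0) (cfm 0) (cgm 0)) ∧
    EntireBddCorrected k Og (corrO N k (Complex.I ^ (-k)) (cgp 0) (cfp 0) (cgm 0) (cfm 0))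

/-- The complex conjugate of a Dirichlet character. -/
def conjChar {N : ℕ} (χ : DirichletCharacter ℂ N) : DirichletCharacter ℂ N :=
  χ.ringHomComp (starRingEnd ℂ)

/-- Twist of a coefficient sequence by a Dirichlet character. -/
def twistC {m : ℕ} (ψ : DirichletCharacter ℂ m) (c : ℕ → ℂ) : ℕ → ℂ :=
  fun n => ψ (n : ZMod m) * c n

/-- The twisted Fourier series `f_ψ`. -/
def twistFn (k : ℤ) {m : ℕ} (ψ : DirichletCharacter ℂ m) (cp cm : ℕ → ℂ) : ℂ → ℂ :=
  maassSeries k (twistC ψ cp) (twistC ψ cm)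

/-- The Gauss sum `τ(ψ) = Σ_{a=0}^{m-1} ψ(a) e^(2πia/m)`. -/
def gSum (m : ℕ) (ψ : DirichletCharacter ℂ m) : ℂ :=
  ∑ a ∈ Finset.range m, ψ (a : ZMod m) * Complex.exp (2 * Real.pi * Complex.I * a / m)

/-- The analytic package for the `ψ`-twisted completed Dirichlet series: entire
continuations, bounded on vertical strips, with functional equations with
constant `Cψ`. -/
def TwistedPackage (N : ℕ) (k : ℤ) (α : ℝ) (m : ℕ) (ψ : DirichletCharacter ℂ m)
    (cfp cfm cgp cgm : ℕ → ℂ) (Cψ : ℂ) : Prop :=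
  ∃ Lf Lg Of' Og : ℂ → ℂ,
    (∀ s : ℂ, α + 1 < s.re → Lf s = LambdaN N k m (twistC ψ cfp) (twistC ψ cfm) s) ∧
    (∀ s : ℂ, α + 1 < s.re →
      Lg s = LambdaN N k m (twistC (conjChar ψ) cgp) (twistC (conjChar ψ) cgm) s) ∧
    (∀ s : ℂ, α + 1 < s.re → Of' s = OmegaN N k m (twistC ψ cfp) (twistC ψ cfm) s) ∧
    (∀ s : ℂ, α + 1 < s.re →
      Og s = OmegaN N k m (twistC (conjChar ψ) cgp) (twistC (conjChar ψ) cgm) s) ∧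
    Differentiable ℂ Lf ∧ Differentiable ℂ Lg ∧ Differentiable ℂ Of' ∧ Differentiable ℂ Og ∧
    BoundedVert Lf ∧ BoundedVert Lg ∧ BoundedVert Of' ∧ BoundedVert Og ∧
    (∀ s : ℂ, Lf s = Complex.I ^ k * Cψ * Lg ((k : ℂ) - s)) ∧
    (∀ s : ℂ, Of' s = -(Complex.I ^ k) * Cψ * Og ((k : ℂ) - s))

abbrev SL2Z := Matrix.SpecialLinearGroup (Fin 2) ℤ

/-- Entry of a matrix in `SL₂(ℤ)`. -/
def mEntry (g : SL2Z) (i j : Fin 2) : ℤ := (g : Matrix (Fin 2) (Fin 2) ℤ) i j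

/-- Slash by a matrix in `SL₂(ℤ)`. -/
def slashM (k : ℤ) (g : SL2Z) (f : ℂ → ℂ) : ℂ → ℂ :=
  slash k (mEntry g 0 0 : ℂ) (mEntry g 0 1 : ℂ) (mEntry g 1 0 : ℂ) (mEntry g 1 1 : ℂ) f

/-- `Γ₀(N)` as a subset of `SL₂(ℤ)`. -/
def Gamma0Set (N : ℕ) : Set SL2Z := {g | (N : ℤ) ∣ mEntry g 1 0}

/-- `Γ_∞`, the stabiliser of `i∞` in `SL₂(ℤ)`. -/
def GammaInfSet : Set SL2Z := {g | mEntry g 1 0 = 0}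

/-- `Γ_ρ = Γ₀(N) ∩ γ_ρ Γ_∞ γ_ρ⁻¹` for the cusp `ρ = γ_ρ(i∞)`. -/
def GammaCusp (N : ℕ) (γρ : SL2Z) : Set SL2Z :=
  {g | g ∈ Gamma0Set N ∧ γρ⁻¹ * g * γρ ∈ GammaInfSet}

/-- `R` is a complete set of representatives for `Γ_ρ \ Γ₀(N)`. -/
def IsCosetReps (N : ℕ) (γρ : SL2Z) (R : Set SL2Z) : Prop :=
  R ⊆ Gamma0Set N ∧
    ∀ g ∈ Gamma0Set N, ∃! r : SL2Z, r ∈ R ∧ ∃ γ ∈ GammaCusp N γρ, g = γ * r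

/-- `χ(g) := χ(d)` for `g = (a b; c d)`. -/
def chiOf {N : ℕ} (χ : DirichletCharacter ℂ N) (g : SL2Z) : ℂ :=
  χ ((mEntry g 1 1 : ℤ) : ZMod N)

/-- The preimage `𝓕_{k,ρ}(N,χ;τ) = Σ_{g ∈ Γ_ρ\Γ₀(N)} χ̄(g) (v^(1-k)/(1-k))|_k γ_ρ⁻¹ g`,
computed using a set `R` of coset representatives. -/
def FEis (k : ℤ) (N : ℕ) (χ : DirichletCharacter ℂ N) (γρ : SL2Z) (R : Set SL2Z) : ℂ → ℂ :=
  fun τ => ∑' r : R, (starRingEnd ℂ) (chiOf χ (r : SL2Z)) *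
    slashM k (γρ⁻¹ * (r : SL2Z)) (fun z => (z.im : ℂ) ^ (1 - k) / ((1 : ℂ) - (k : ℂ))) τ

/-- The Eisenstein series `E_{2-k,ρ}(N,χ;τ) = Σ_{g ∈ Γ_ρ\Γ₀(N)} χ̄(g) j(γ_ρ⁻¹g, τ)^(k-2)`,
computed using a set `R` of coset representatives. -/
def EisSeries (k : ℤ) (N : ℕ) (χ : DirichletCharacter ℂ N) (γρ : SL2Z) (R : Set SL2Z) :
    ℂ → ℂ := fun τ => ∑' r : R, (starRingEnd ℂ) (chiOf χ (r : SL2Z)) *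
      ((mEntry (γρ⁻¹ * (r : SL2Z)) 1 0 : ℂ) * τ + (mEntry (γρ⁻¹ * (r : SL2Z)) 1 1 : ℂ)) ^ (k - 2)

/-- Two cusps `γν(i∞)` and `γρ(i∞)` are `Γ₀(N)`-equivalent. -/
def CuspEquiv (N : ℕ) (γν γρ : SL2Z) : Prop :=
  ∃ g ∈ Gamma0Set N, ∃ h ∈ GammaInfSet, γν = g * γρ * h

/-!
Put `j = c τ + d` for the bottom row `(c, d)` of `γ_ρ⁻¹ g`. The summand of `𝓕` is
`χ̄(g) v^(1-k)/(1-k)` times `j⁻¹ j̄^(k-1)`, and distinct cosets have distinct bottom rows, so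
everything reduces to series `∑ aᵢ jᵢ^p j̄ᵢ^q` over lattice points, which converge locally uniformly
with all derivatives when `p + q < -2`. The relation `j = j̄ + 2 i v c` makes `∂/∂τ̄` collapse the
summand to `(i/2) χ̄(g) v^(-k) j̄^(k-2)`: this is `v^(-k)` times an antiholomorphic function, which
gives harmonicity, and its conjugate yields the Eisenstein summand.

For the growth estimate, if `c ≠ 0` and `v ≥ 1` then both `|c| v` and `|Re j|` are at most `|j|`, so
`|j|²` dominates `v (|c| + 1) (|e| + 1)` with `e = d + ⌊c u⌋`, and each term of the series is
`O(v^(-k/2))` times a summable weight in `(c, e)`. A bottom row with `c = 0` occurs only when the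
two cusps are equivalent, and contributes `O(v^(1-k))`.
-/

open scoped ComplexConjugate UpperHalfPlane Topology

section Wirtinger

variable {f g : ℂ → ℂ} {a b a' b' z : ℂ}

/-- `f` is real-differentiable at `z` with Wirtinger derivatives `∂f/∂z = a` and `∂f/∂z̄ = b`. -/
def HasWirtingerDerivAt (f : ℂ → ℂ) (a b z : ℂ) : Prop :=
  HasFDerivAt f (a • ContinuousLinearMap.id ℝ ℂ + b • (conjCLE : ℂ →L[ℝ] ℂ)) z

namespace HasWirtingerDerivAt

lemma pdU_eq (hf : HasWirtingerDerivAt f a b z) : pdU f z = a + b := by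
  simp [pdU, HasFDerivAt.fderiv hf]

lemma pdV_eq (hf : HasWirtingerDerivAt f a b z) : pdV f z = I * (a - b) := by
  simp only [pdV, HasFDerivAt.fderiv hf, add_apply, smul_apply, ContinuousLinearMap.id_apply,
    ContinuousLinearEquiv.coe_coe, conjCLE_apply, conj_I, smul_eq_mul]
  ring

lemma wirt_eq (hf : HasWirtingerDerivAt f a b z) : wirt f z = a := by
  rw [wirt, hf.pdU_eq, hf.pdV_eq]
  linear_combination (-(a - b) / 2) * I_sq

lemma wirtBar_eq (hf : HasWirtingerDerivAt f a b z) : wirtBar f z = b := by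
  rw [wirtBar, hf.pdU_eq, hf.pdV_eq]
  linear_combination ((a - b) / 2) * I_sq

lemma mul (hf : HasWirtingerDerivAt f a b z) (hg : HasWirtingerDerivAt g a' b' z) :
    HasWirtingerDerivAt (fun w => f w * g w) (a * g z + f z * a') (b * g z + f z * b') z := by
  refine (HasFDerivAt.mul hf hg).congr_fderiv ?_
  ext
  simp
  ring

lemma const_mul (hf : HasWirtingerDerivAt f a b z) (c : ℂ) :
    HasWirtingerDerivAt (fun w => c * f w) (c * a) (c * b) z := by
  refine (HasFDerivAt.const_mul hf c).congr_fderiv ?_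
  ext
  simp
  ring

lemma add_const (hf : HasWirtingerDerivAt f a b z) (c : ℂ) :
    HasWirtingerDerivAt (fun w => f w + c) a b z :=
  HasFDerivAt.add_const c hf

lemma zpow (hf : HasWirtingerDerivAt f a b z) (hfz : f z ≠ 0) (n : ℤ) :
    HasWirtingerDerivAt (fun w => f w ^ n) (n * f z ^ (n - 1) * a) (n * f z ^ (n - 1) * b) z := by
  refine ((hasDerivAt_zpow n (f z) (Or.inl hfz)).comp_hasFDerivAt z hf).congr_fderiv ?_
  ext
  simp
  ring

lemma congr_of_eventuallyEq (hf : HasWirtingerDerivAt f a b z) (hgf : g =ᶠ[𝓝 z] f) :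
    HasWirtingerDerivAt g a b z :=
  HasFDerivAt.congr_of_eventuallyEq hf hgf

end HasWirtingerDerivAt

lemma hasWirtingerDerivAt_id (z : ℂ) : HasWirtingerDerivAt (fun w => w) 1 0 z := by
  refine (hasFDerivAt_id z).congr_fderiv ?_
  ext
  simp

lemma hasWirtingerDerivAt_conj (z : ℂ) : HasWirtingerDerivAt (fun w => conj w) 0 1 z := by
  refine (conjCLE : ℂ →L[ℝ] ℂ).hasFDerivAt.congr_fderiv ?_
  ext
  simp

lemma hasWirtingerDerivAt_im (z : ℂ) :
    HasWirtingerDerivAt (fun w => (w.im : ℂ)) (-I / 2) (I / 2) z := by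
  refine (ofRealCLM.comp imCLM).hasFDerivAt.congr_fderiv ?_
  ext w
  simp only [ContinuousLinearMap.comp_apply, imCLM_apply, ofRealCLM_apply, add_apply, smul_apply,
    ContinuousLinearMap.id_apply, ContinuousLinearEquiv.coe_coe, conjCLE_apply, smul_eq_mul]
  have him : w - conj w = 2 * w.im * I := by rw [sub_conj, ofReal_mul, ofReal_ofNat]
  linear_combination (I / 2) * him + w.im * I_sq

lemma hasWirtingerDerivAt_tsum {ι : Type*} {f a b : ι → ℂ → ℂ} {u v : ι → ℝ} {s : Set ℂ}
    (hu : Summable u) (hv : Summable v) (hs : IsOpen s) (hsc : IsPreconnected s)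
    (hf : ∀ i, ∀ w ∈ s, HasWirtingerDerivAt (f i) (a i w) (b i w) w)
    (ha : ∀ i, ∀ w ∈ s, ‖a i w‖ ≤ u i) (hb : ∀ i, ∀ w ∈ s, ‖b i w‖ ≤ v i)
    (hz : z ∈ s) (hfz : Summable fun i => f i z) :
    HasWirtingerDerivAt (fun w => ∑' i, f i w) (∑' i, a i z) (∑' i, b i z) z := by
  have norm_fderiv_le : ∀ i, ∀ w ∈ s,
      ‖a i w • ContinuousLinearMap.id ℝ ℂ + b i w • (conjCLE : ℂ →L[ℝ] ℂ)‖ ≤ u i + v i := by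
    intro i w hw
    refine (norm_add_le _ _).trans (add_le_add ?_ ?_)
    · rw [norm_smul]
      exact (mul_le_of_le_one_right (norm_nonneg _) ContinuousLinearMap.norm_id_le).trans
        (ha i w hw)
    · rw [norm_smul, conjCLE_norm, mul_one]
      exact hb i w hw
  refine (hasFDerivAt_tsum_of_isPreconnected (hu.add hv) hs hsc hf norm_fderiv_le hz hfz
    hz).congr_fderiv ?_
  have haz : Summable fun i => a i z := .of_norm_bounded hu fun i => ha i z hz
  have hbz : Summable fun i => b i z := .of_norm_bounded hv fun i => hb i z hz
  exact ((haz.hasSum.smul_const _).add (hbz.hasSum.smul_const _)).tsum_eq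

lemma wirt_wirtBar (hf : ContDiffAt ℝ 2 f z) :
    wirt (wirtBar f) z = (pdU (pdU f) z + pdV (pdV f) z) / 4 := by
  have hd : DifferentiableAt ℝ (fderiv ℝ f) z :=
    (hf.fderiv_right (m := 1) one_add_one_eq_two.le).differentiableAt one_ne_zero
  have hpd : ∀ e, HasFDerivAt (fun w => fderiv ℝ f w e) ((fderiv ℝ (fderiv ℝ f) z).flip e) z := by
    intro e
    refine (hd.hasFDerivAt.clm_apply (hasFDerivAt_const e z)).congr_fderiv ?_
    ext
    simp
  have hbar : HasFDerivAt (wirtBar f) ((2 : ℂ)⁻¹ • ((fderiv ℝ (fderiv ℝ f) z).flip 1 +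
      I • (fderiv ℝ (fderiv ℝ f) z).flip I)) z := by
    refine (((hpd 1).add ((hpd I).const_mul I)).const_mul (2 : ℂ)⁻¹).congr_of_eventuallyEq ?_
    exact .of_forall fun w => div_eq_inv_mul (pdU f w + I * pdV f w) 2
  have hUU : pdU (pdU f) z = fderiv ℝ (fderiv ℝ f) z 1 1 :=
    DFunLike.congr_fun (hpd 1).fderiv 1
  have hVV : pdV (pdV f) z = fderiv ℝ (fderiv ℝ f) z I I :=
    DFunLike.congr_fun (hpd I).fderiv I
  have hsymm : fderiv ℝ (fderiv ℝ f) z 1 I = fderiv ℝ (fderiv ℝ f) z I 1 :=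
    hf.isSymmSndFDerivAt (by simp) 1 I
  rw [hUU, hVV, wirt, pdU, pdV, hbar.fderiv]
  simp only [smul_apply, add_apply, ContinuousLinearMap.flip_apply, smul_eq_mul, hsymm]
  linear_combination (-(fderiv ℝ (fderiv ℝ f) z I I) / 4) * I_sq

lemma hypLaplacian_eq_wirt_wirtBar (k : ℤ) (hf : ContDiffAt ℝ 2 f z) :
    hypLaplacian k f z = -4 * (z.im : ℂ) ^ 2 * wirt (wirtBar f) z +
      2 * I * k * z.im * wirtBar f z := by
  rw [wirt_wirtBar hf, wirtBar, hypLaplacian]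
  ring

lemma hypLaplacian_eq_zero_of_antiholomorphic {k : ℤ} (hz : 0 < z.im) (hf : ContDiffAt ℝ 2 f z)
    (hfg : wirtBar f =ᶠ[𝓝 z] fun w => (w.im : ℂ) ^ (-k) * g w)
    (hg : HasWirtingerDerivAt g 0 b z) : hypLaplacian k f z = 0 := by
  have hv : (z.im : ℂ) ≠ 0 := ofReal_ne_zero.2 hz.ne'
  have hdd : wirt (wirtBar f) z = I / 2 * k * (z.im : ℂ) ^ (-k - 1) * g z := by
    rw [((((hasWirtingerDerivAt_im z).zpow hv (-k)).mul hg).congr_of_eventuallyEq hfg).wirt_eq]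
    push_cast
    ring
  rw [hypLaplacian_eq_wirt_wirtBar k hf, hdd, hfg.eq_of_nhds, zpow_sub_one₀ hv]
  field_simp
  ring

lemma wirtBar_congr_of_eventuallyEq (hfg : f =ᶠ[𝓝 z] g) : wirtBar f z = wirtBar g z := by
  simp only [wirtBar, pdU, pdV, hfg.fderiv_eq]

lemma hypLaplacian_congr_of_eventuallyEq (k : ℤ) (hfg : f =ᶠ[𝓝 z] g) :
    hypLaplacian k f z = hypLaplacian k g z := by
  have hU : pdU f =ᶠ[𝓝 z] pdU g := hfg.fderiv.mono fun w hw => DFunLike.congr_fun hw 1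
  have hV : pdV f =ᶠ[𝓝 z] pdV g := hfg.fderiv.mono fun w hw => DFunLike.congr_fun hw I
  rw [hypLaplacian, hypLaplacian, hU.eq_of_nhds, hV.eq_of_nhds, pdU, pdU, pdV, pdV, hU.fderiv_eq,
    hV.fderiv_eq, ← pdU, ← pdV]

end Wirtinger

lemma isOpen_UHP : IsOpen UHP :=
  UpperHalfPlane.isOpen_upperHalfPlaneSet

lemma ball_subset_UHP {z : ℂ} (hz : z ∈ UHP) : Metric.ball z (z.im / 2) ⊆ UHP := by
  intro w hw
  have hz0 : 0 < z.im := hz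
  have hdist := (abs_le.1 ((abs_im_le_norm (w - z)).trans (mem_ball_iff_norm.1 hw).le)).1
  rw [sub_im] at hdist
  exact (by linarith : 0 < w.im)

lemma contDiffOn_im_zpow (n : ℤ) : ContDiffOn ℝ (⊤ : ℕ∞) (fun z => (z.im : ℂ) ^ n) UHP := by
  have him : ContDiffOn ℝ (⊤ : ℕ∞) (fun z : ℂ => (z.im : ℂ)) UHP :=
    (ofRealCLM.comp imCLM).contDiff.contDiffOn
  cases n with
  | ofNat m => simpa only [Int.ofNat_eq_natCast, zpow_natCast] using him.pow m
  | negSucc m =>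
    simp only [zpow_negSucc]
    exact (him.pow (m + 1)).inv fun z hz => pow_ne_zero _ (ofReal_ne_zero.2 (ne_of_gt hz))

section LatticePoint

variable {x : Fin 2 → ℤ} {z : ℂ}

lemma latticePoint_ne_zero (hx : x ≠ 0) (hz : z ∈ UHP) : (x 0 : ℂ) * z + x 1 ≠ 0 := by
  have hx' : (fun i => (x i : ℝ)) ≠ 0 := fun h =>
    hx (funext fun i => Int.cast_eq_zero.1 (congrFun h i))
  simpa using UpperHalfPlane.linear_ne_zero ⟨z, hz⟩ hx'

lemma exists_norm_latticePoint_zpow_le (hz : z ∈ UHP) {n : ℤ} (hn : n ≤ 0) :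
    ∃ C : ℝ, ∀ w ∈ Metric.ball z (z.im / 2), ∀ x : Fin 2 → ℤ,
      ‖(x 0 : ℂ) * w + x 1‖ ^ n ≤ C * ‖x‖ ^ n := by
  have hz0 : 0 < z.im := hz
  refine ⟨EisensteinSeries.r ⟨⟨|z.re| + z.im / 2, z.im / 2⟩, half_pos hz0⟩ ^ n,
    fun w hw x => ?_⟩
  have hdist : ‖w - z‖ < z.im / 2 := mem_ball_iff_norm.1 hw
  have him : z.im / 2 ≤ w.im := by
    have := (abs_le.1 ((abs_im_le_norm (w - z)).trans hdist.le)).1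
    rw [sub_im] at this
    linarith
  have hre : |w.re| ≤ |z.re| + z.im / 2 := by
    have := (abs_re_le_norm (w - z)).trans hdist.le
    rw [sub_re] at this
    linarith [abs_sub_abs_le_abs_sub w.re z.re]
  have hbound := EisensteinSeries.summand_bound_of_mem_verticalStrip
    (z := ⟨w, (half_pos hz0).trans_le him⟩) (k := -(n : ℝ))
    (neg_nonneg.2 (Int.cast_nonpos.2 hn)) x (half_pos hz0) ⟨hre, him⟩
  simpa only [neg_neg, Real.rpow_intCast] using hbound

/-- The monomial `j^p j̄^q` in the lattice point `j = x₀ z + x₁`. -/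
def latticeTerm (x : Fin 2 → ℤ) (p q : ℤ) (z : ℂ) : ℂ :=
  (x 0 * z + x 1) ^ p * (x 0 * conj z + x 1) ^ q

lemma conj_latticePoint (x : Fin 2 → ℤ) (z : ℂ) :
    conj ((x 0 : ℂ) * z + x 1) = x 0 * conj z + x 1 := by
  simp only [map_add, map_mul, map_intCast]

lemma latticePoint_conj_ne_zero (hx : x ≠ 0) (hz : z ∈ UHP) : (x 0 : ℂ) * conj z + x 1 ≠ 0 := by
  rw [← conj_latticePoint]
  exact (map_ne_zero _).2 (latticePoint_ne_zero hx hz)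

lemma norm_latticeTerm (hx : x ≠ 0) (hz : z ∈ UHP) (p q : ℤ) :
    ‖latticeTerm x p q z‖ = ‖(x 0 : ℂ) * z + x 1‖ ^ (p + q) := by
  rw [latticeTerm, norm_mul, norm_zpow, norm_zpow, ← conj_latticePoint, norm_conj,
    zpow_add₀ (norm_ne_zero_iff.2 (latticePoint_ne_zero hx hz))]

lemma hasWirtingerDerivAt_latticeTerm (hx : x ≠ 0) (hz : z ∈ UHP) (p q : ℤ) :
    HasWirtingerDerivAt (latticeTerm x p q) (p * (x 0 * latticeTerm x (p - 1) q z))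
      (q * (x 0 * latticeTerm x p (q - 1) z)) z := by
  have hj := (((hasWirtingerDerivAt_id z).const_mul (x 0)).add_const (x 1)).zpow
    (latticePoint_ne_zero hx hz) p
  have hjbar := (((hasWirtingerDerivAt_conj z).const_mul (x 0)).add_const (x 1)).zpow
    (latticePoint_conj_ne_zero hx hz) q
  convert hj.mul hjbar using 1
  · rfl
  · rw [latticeTerm]; ring
  · rw [latticeTerm]; ring

lemma latticeTerm_add_one_left (hx : x ≠ 0) (hz : z ∈ UHP) (p q : ℤ) :
    latticeTerm x (p + 1) q z =
      latticeTerm x p (q + 1) z + 2 * I * z.im * (x 0 * latticeTerm x p q z) := by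
  have him : z - conj z = 2 * z.im * I := by rw [sub_conj, ofReal_mul, ofReal_ofNat]
  simp only [latticeTerm, zpow_add_one₀ (latticePoint_ne_zero hx hz),
    zpow_add_one₀ (latticePoint_conj_ne_zero hx hz)]
  linear_combination
    (x 0 * (x 0 * z + x 1 : ℂ) ^ p * (x 0 * conj z + x 1) ^ q) * him

end LatticePoint

section LatticeSeries

variable {ι : Type*} {x : ι → Fin 2 → ℤ} {a : ι → ℂ} {z : ℂ} {k n p q : ℤ}

/-- The series `∑ aᵢ jᵢ^p j̄ᵢ^q` over a family of lattice points `jᵢ = xᵢ₀ z + xᵢ₁`. -/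
def latticeSeries (x : ι → Fin 2 → ℤ) (a : ι → ℂ) (p q : ℤ) (z : ℂ) : ℂ :=
  ∑' i, a i * latticeTerm (x i) p q z

/-- The weighted family `(xᵢ, aᵢ)` is summable in degree `n`: this is what makes
`latticeSeries x a p q` with `p + q = n` converge locally uniformly on `ℍ`. -/
structure IsLatticeSummable (x : ι → Fin 2 → ℤ) (a : ι → ℂ) (n : ℤ) : Prop where
  nonpos : n ≤ 0
  ne_zero : ∀ i, x i ≠ 0
  summable : Summable fun i => ‖a i‖ * ‖x i‖ ^ n

namespace IsLatticeSummable

lemma of_injective (hinj : Function.Injective x) (hx : ∀ i, x i ≠ 0) (ha : ∀ i, ‖a i‖ ≤ 1)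
    (hn : n < -2) : IsLatticeSummable x a n where
  nonpos := by lia
  ne_zero := hx
  summable := by
    have hn' : (2 : ℝ) < ((-n : ℤ) : ℝ) := by exact_mod_cast (by lia : 2 < -n)
    have hsum : Summable fun i => ‖x i‖ ^ n := by
      simpa only [← Int.cast_neg, neg_neg, Real.rpow_intCast, Function.comp_def] using
        (EisensteinSeries.summable_one_div_norm_rpow hn').comp_injective hinj
    exact hsum.of_nonneg_of_le (fun i => by positivity)
      fun i => mul_le_of_le_one_left (by positivity) (ha i)

lemma fst_mul (h : IsLatticeSummable x a n) :
    IsLatticeSummable x (fun i => x i 0 * a i) (n - 1) where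
  nonpos := by linarith [h.nonpos]
  ne_zero := h.ne_zero
  summable := by
    refine h.summable.of_nonneg_of_le (fun i => by positivity) fun i => ?_
    have hfst : ‖(x i 0 : ℂ)‖ ≤ ‖x i‖ := by
      simpa only [norm_intCast, Int.norm_eq_abs] using norm_le_pi_norm (x i) 0
    calc ‖(x i 0 : ℂ) * a i‖ * ‖x i‖ ^ (n - 1)
        = ‖(x i 0 : ℂ)‖ * (‖a i‖ * ‖x i‖ ^ (n - 1)) := by rw [norm_mul]; ring
      _ ≤ ‖x i‖ * (‖a i‖ * ‖x i‖ ^ (n - 1)) := by gcongr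
      _ = ‖a i‖ * ‖x i‖ ^ n := by
        rw [zpow_sub_one₀ (norm_ne_zero_iff.2 (h.ne_zero i))]
        field_simp [norm_ne_zero_iff.2 (h.ne_zero i)]

lemma exists_summable_bound (h : IsLatticeSummable x a (p + q)) (hz : z ∈ UHP) :
    ∃ u : ι → ℝ, Summable u ∧ ∀ i, ∀ w ∈ Metric.ball z (z.im / 2),
      ‖a i * latticeTerm (x i) p q w‖ ≤ u i := by
  obtain ⟨C, hC⟩ := exists_norm_latticePoint_zpow_le hz h.nonpos
  refine ⟨_, h.summable.mul_left C, fun i w hw => ?_⟩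
  calc ‖a i * latticeTerm (x i) p q w‖
      = ‖a i‖ * ‖(x i 0 : ℂ) * w + x i 1‖ ^ (p + q) := by
        rw [norm_mul, norm_latticeTerm (h.ne_zero i) (ball_subset_UHP hz hw)]
    _ ≤ ‖a i‖ * (C * ‖x i‖ ^ (p + q)) := by gcongr; exact hC w hw (x i)
    _ = C * (‖a i‖ * ‖x i‖ ^ (p + q)) := mul_left_comm _ _ _

lemma summable_norm (h : IsLatticeSummable x a (p + q)) (hz : z ∈ UHP) :
    Summable fun i => ‖a i * latticeTerm (x i) p q z‖ := by
  obtain ⟨u, hu, hle⟩ := h.exists_summable_bound hz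
  exact hu.of_nonneg_of_le (fun _ => norm_nonneg _)
    fun i => hle i z (Metric.mem_ball_self (half_pos hz))

lemma hasWirtingerDerivAt_latticeSeries (h : IsLatticeSummable x a (p + q)) (hz : z ∈ UHP) :
    HasWirtingerDerivAt (latticeSeries x a p q)
      (p * latticeSeries x (fun i => x i 0 * a i) (p - 1) q z)
      (q * latticeSeries x (fun i => x i 0 * a i) p (q - 1) z) z := by
  have hp : IsLatticeSummable x (fun i => x i 0 * a i) (p - 1 + q) := by
    rw [sub_add_eq_add_sub]; exact h.fst_mul
  have hq : IsLatticeSummable x (fun i => x i 0 * a i) (p + (q - 1)) := by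
    rw [← add_sub_assoc]; exact h.fst_mul
  obtain ⟨u, hu, hule⟩ := hp.exists_summable_bound hz
  obtain ⟨v, hv, hvle⟩ := hq.exists_summable_bound hz
  have hterm : ∀ i, ∀ w ∈ Metric.ball z (z.im / 2),
      HasWirtingerDerivAt (fun w => a i * latticeTerm (x i) p q w)
        (p * (x i 0 * a i * latticeTerm (x i) (p - 1) q w))
        (q * (x i 0 * a i * latticeTerm (x i) p (q - 1) w)) w := by
    intro i w hw
    convert (hasWirtingerDerivAt_latticeTerm (h.ne_zero i) (ball_subset_UHP hz hw) p q).const_mul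
      (a i) using 1 <;> ring
  have hsum := hasWirtingerDerivAt_tsum (hu.mul_left ‖(p : ℂ)‖) (hv.mul_left ‖(q : ℂ)‖)
    Metric.isOpen_ball (convex_ball z (z.im / 2)).isPreconnected hterm
    (fun i w hw => by grw [norm_mul, hule i w hw]) (fun i w hw => by grw [norm_mul, hvle i w hw])
    (Metric.mem_ball_self (half_pos hz)) (h.summable_norm hz).of_norm
  simp only [tsum_mul_left] at hsum
  exact hsum

lemma contDiffOn_latticeSeries_natCast (m : ℕ) : ∀ {a : ι → ℂ} {p q : ℤ},
    IsLatticeSummable x a (p + q) → ContDiffOn ℝ m (latticeSeries x a p q) UHP := by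
  induction m with
  | zero =>
    intro a p q h
    rw [Nat.cast_zero, contDiffOn_zero]
    exact fun z hz =>
      (h.hasWirtingerDerivAt_latticeSeries hz : HasFDerivAt _ _ z).continuousAt.continuousWithinAt
  | succ m ih =>
    intro a p q h
    have hp : IsLatticeSummable x (fun i => x i 0 * a i) (p - 1 + q) := by
      rw [sub_add_eq_add_sub]; exact h.fst_mul
    have hq : IsLatticeSummable x (fun i => x i 0 * a i) (p + (q - 1)) := by
      rw [← add_sub_assoc]; exact h.fst_mul
    rw [Nat.cast_succ, contDiffOn_succ_iff_hasFDerivWithinAt_of_uniqueDiffOn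
      isOpen_UHP.uniqueDiffOn]
    refine ⟨by simp, _, ?_, fun z hz =>
      (h.hasWirtingerDerivAt_latticeSeries hz : HasFDerivAt _ _ z).hasFDerivWithinAt⟩
    exact ((contDiffOn_const.mul (ih hp)).smul contDiffOn_const).add
      ((contDiffOn_const.mul (ih hq)).smul contDiffOn_const)

lemma contDiffOn_latticeSeries (h : IsLatticeSummable x a (p + q)) :
    ContDiffOn ℝ (⊤ : ℕ∞) (latticeSeries x a p q) UHP :=
  contDiffOn_infty.2 fun m => contDiffOn_latticeSeries_natCast m h

lemma latticeSeries_add_one_left (h : IsLatticeSummable x a (p + q + 1)) (hz : z ∈ UHP) :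
    latticeSeries x a (p + 1) q z = latticeSeries x a p (q + 1) z +
      2 * I * z.im * latticeSeries x (fun i => x i 0 * a i) p q z := by
  have h₁ : IsLatticeSummable x a (p + (q + 1)) := by rwa [← add_assoc]
  have h₂ : IsLatticeSummable x (fun i => x i 0 * a i) (p + q) := by
    simpa only [add_sub_cancel_right] using h.fst_mul
  simp only [latticeSeries]
  rw [← tsum_mul_left, ← (h₁.summable_norm hz).of_norm.tsum_add
    ((h₂.summable_norm hz).of_norm.mul_left _)]
  refine tsum_congr fun i => ?_
  rw [latticeTerm_add_one_left (h.ne_zero i) hz]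
  ring

end IsLatticeSummable

/-- The lift of the antiholomorphic Eisenstein-type series `∑ aᵢ j̄ᵢ^(k-2)` to a weight-`k`
harmonic function, whose `i`-th term is `aᵢ` times `v^(1-k)/(1-k)` slashed by a matrix with
bottom row `xᵢ`. -/
def harmonicLift (k : ℤ) (x : ι → Fin 2 → ℤ) (a : ι → ℂ) (z : ℂ) : ℂ :=
  (z.im : ℂ) ^ (1 - k) / (1 - k) * latticeSeries x a (-1) (k - 1) z

namespace IsLatticeSummable

lemma contDiffOn_harmonicLift (h : IsLatticeSummable x a (k - 2)) :
    ContDiffOn ℝ (⊤ : ℕ∞) (harmonicLift k x a) UHP := by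
  have h' : IsLatticeSummable x a (-1 + (k - 1)) := by convert h using 1; ring
  exact ((contDiffOn_im_zpow (1 - k)).div_const _).mul h'.contDiffOn_latticeSeries

lemma wirtBar_harmonicLift (h : IsLatticeSummable x a (k - 2)) (hk : k ≠ 1) (hz : z ∈ UHP) :
    wirtBar (harmonicLift k x a) z = I / 2 * (z.im : ℂ) ^ (-k) * latticeSeries x a 0 (k - 2) z := by
  have h' : IsLatticeSummable x a (-1 + (k - 1)) := by convert h using 1; ring
  have h'' : IsLatticeSummable x a (-1 + (k - 2) + 1) := by convert h using 1; ring
  have hv : (z.im : ℂ) ≠ 0 := ofReal_ne_zero.2 (ne_of_gt hz)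
  have hk1 : (1 : ℂ) - k ≠ 0 := by exact_mod_cast sub_ne_zero.2 hk.symm
  have hlift := (((hasWirtingerDerivAt_im z).zpow hv (1 - k)).const_mul (1 - k : ℂ)⁻¹).mul
    (h'.hasWirtingerDerivAt_latticeSeries hz)
  have hrel := h''.latticeSeries_add_one_left hz
  have hdef : harmonicLift k x a = fun w =>
      (1 - k : ℂ)⁻¹ * (w.im : ℂ) ^ (1 - k) * latticeSeries x a (-1) (k - 1) w :=
    funext fun w => by rw [harmonicLift, div_eq_inv_mul]
  rw [neg_add_cancel, show k - 2 + 1 = k - 1 by ring] at hrel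
  rw [hdef, hlift.wirtBar_eq, hrel, show 1 - k - 1 = -k by ring, show k - 1 - 1 = k - 2 by ring,
    show 1 - k = -k + 1 by ring, zpow_add_one₀ hv]
  push_cast
  field_simp
  linear_combination (2 * (k - 1) * z.im * latticeSeries x (fun i => x i 0 * a i) (-1) (k - 2) z) *
    I_sq

lemma hypLaplacian_harmonicLift (h : IsLatticeSummable x a (k - 2)) (hk : k ≠ 1) (hz : z ∈ UHP) :
    hypLaplacian k (harmonicLift k x a) z = 0 := by
  have hnhds : UHP ∈ 𝓝 z := isOpen_UHP.mem_nhds hz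
  have h' : IsLatticeSummable x a (0 + (k - 2)) := by rwa [zero_add]
  have hanti : HasWirtingerDerivAt (fun w => I / 2 * latticeSeries x a 0 (k - 2) w) 0
      (I / 2 * ((k - 2 : ℤ) * latticeSeries x (fun i => x i 0 * a i) 0 (k - 2 - 1) z)) z := by
    simpa only [Int.cast_zero, zero_mul, mul_zero] using
      (h'.hasWirtingerDerivAt_latticeSeries hz).const_mul (I / 2)
  refine hypLaplacian_eq_zero_of_antiholomorphic hz
    ((contDiffOn_infty.1 h.contDiffOn_harmonicLift 2).contDiffAt hnhds) ?_ hanti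
  filter_upwards [hnhds] with w hw
  rw [h.wirtBar_harmonicLift hk hw]
  ring

lemma xiOp_harmonicLift (h : IsLatticeSummable x a (k - 2)) (hk : k ≠ 1) (hz : z ∈ UHP) :
    xiOp k (harmonicLift k x a) z = ∑' i, conj (a i) * (x i 0 * z + x i 1 : ℂ) ^ (k - 2) := by
  have hv : (z.im : ℂ) ≠ 0 := ofReal_ne_zero.2 (ne_of_gt hz)
  have hconj : conj (latticeSeries x a 0 (k - 2) z) =
      ∑' i, conj (a i) * (x i 0 * z + x i 1 : ℂ) ^ (k - 2) := by
    rw [latticeSeries, conj_tsum]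
    refine tsum_congr fun i => ?_
    rw [latticeTerm, zpow_zero, one_mul, map_mul, map_zpow₀, ← conj_latticePoint, conj_conj]
  rw [xiOp, h.wirtBar_harmonicLift hk hz, map_mul, map_mul, ← hconj, map_div₀, conj_I, map_zpow₀,
    conj_ofReal, map_ofNat, zpow_neg]
  field_simp
  linear_combination (-conj (latticeSeries x a 0 (k - 2) z)) * I_sq

end IsLatticeSummable

end LatticeSeries

section SlashAction

variable {k : ℤ} {f : ℂ → ℂ}

lemma slashM_apply (k : ℤ) (g : SL2Z) (f : ℂ → ℂ) (τ : ℍ) :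
    slashM k g f τ = UpperHalfPlane.denom g τ ^ (-k) * f ↑(g • τ) := by
  have hdet : (mEntry g 0 0 : ℂ) * mEntry g 1 1 - mEntry g 0 1 * mEntry g 1 0 = 1 := by
    have := g.det_coe
    rw [Matrix.det_fin_two] at this
    exact_mod_cast this
  rw [slashM, slash, hdet, one_cpow, one_mul, ModularGroup.denom_apply,
    UpperHalfPlane.coe_specialLinearGroup_apply]
  simp [mEntry]

lemma slashM_one (k : ℤ) (f : ℂ → ℂ) (τ : ℍ) : slashM k 1 f τ = f τ := by
  simp [slashM_apply]

lemma slashM_mul (k : ℤ) (g h : SL2Z) (f : ℂ → ℂ) (τ : ℍ) :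
    slashM k (g * h) f τ = slashM k h (slashM k g f) τ := by
  have hcocycle : UpperHalfPlane.denom (g * h : SL2Z) τ =
      UpperHalfPlane.denom g ↑(h • τ) * UpperHalfPlane.denom h τ := by
    rw [ModularGroup.sl_moeb, UpperHalfPlane.coe_smul_of_det_pos (by simp),
      ← UpperHalfPlane.denom_cocycle _ _ τ.im_ne_zero, ← map_mul, ← map_mul]
  rw [slashM_apply, slashM_apply, slashM_apply, mul_smul, hcocycle, mul_zpow]
  ring

/-- The function `v^(1-k)/(1-k)` whose translates are summed in `FEis`. -/
def imPowSeed (k : ℤ) (z : ℂ) : ℂ := (z.im : ℂ) ^ (1 - k) / ((1 : ℂ) - (k : ℂ))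

lemma slashM_imPowSeed (k : ℤ) (g : SL2Z) (τ : ℍ) :
    slashM k g (imPowSeed k) τ =
      (τ.im : ℂ) ^ (1 - k) / (1 - k) * latticeTerm (g 1) (-1) (k - 1) τ := by
  have hj := latticePoint_ne_zero (Matrix.SpecialLinearGroup.row_ne_zero g 1) τ.im_pos
  have hjbar := latticePoint_conj_ne_zero (Matrix.SpecialLinearGroup.row_ne_zero g 1) τ.im_pos
  rw [slashM_apply, imPowSeed, UpperHalfPlane.coe_im, ModularGroup.im_smul_eq_div_normSq,
    ofReal_div, ← mul_conj, ModularGroup.denom_apply, conj_latticePoint, latticeTerm, div_zpow,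
    mul_zpow, show 1 - k = -(k - 1) by ring, zpow_neg, zpow_neg, zpow_neg, zpow_neg,
    zpow_sub_one₀ hj]
  field_simp

lemma eq_one_or_neg_one_of_mem_GammaInfSet {g : SL2Z} (hg : g ∈ GammaInfSet) :
    g 1 1 = 1 ∨ g 1 1 = -1 := by
  have hg10 : g 1 0 = 0 := hg
  have hdet := g.det_coe
  rw [Matrix.det_fin_two, hg10, mul_zero, sub_zero] at hdet
  exact Int.isUnit_iff.1 (.of_mul_eq_one _ (by rwa [mul_comm]))

lemma slashM_imPowSeed_of_mem_GammaInfSet (hk : Even k) {g : SL2Z} (hg : g ∈ GammaInfSet) (τ : ℍ) :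
    slashM k g (imPowSeed k) τ = imPowSeed k τ := by
  have hg10 : g 1 0 = 0 := hg
  have hterm : latticeTerm (g 1) (-1) (k - 1) τ = 1 := by
    rcases eq_one_or_neg_one_of_mem_GammaInfSet hg with h | h
    · simp [latticeTerm, hg10, h]
    · simp [latticeTerm, hg10, h, (hk.sub_odd odd_one).neg_one_zpow]
  rw [slashM_imPowSeed, hterm, mul_one, imPowSeed, UpperHalfPlane.coe_im]

lemma mul_inv_mem_GammaInfSet {g h : SL2Z} (hgh : g 1 = h 1) : g * h⁻¹ ∈ GammaInfSet := by
  change (g * h⁻¹) 1 0 = 0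
  rw [Matrix.SpecialLinearGroup.coe_mul, Matrix.SpecialLinearGroup.coe_inv,
    Matrix.adjugate_fin_two, Matrix.mul_apply, Fin.sum_univ_two]
  simp [hgh]
  ring

end SlashAction

section Level

variable {N : ℕ} {χ : DirichletCharacter ℂ N} {γρ : SL2Z} {g h : SL2Z}

lemma mem_Gamma0 : g ∈ CongruenceSubgroup.Gamma0 N ↔ g ∈ Gamma0Set N := by
  rw [CongruenceSubgroup.Gamma0_mem]
  exact ZMod.intCast_zmod_eq_zero_iff_dvd _ _

lemma mem_Gamma0_zero : g ∈ CongruenceSubgroup.Gamma0 0 ↔ g ∈ GammaInfSet :=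
  mem_Gamma0.trans zero_dvd_iff

/-- `GammaCusp N γρ` as a subgroup; `Γ_∞` is `Γ₀(0)`. -/
def gammaCuspSubgroup (N : ℕ) (γρ : SL2Z) : Subgroup SL2Z :=
  CongruenceSubgroup.Gamma0 N ⊓ (CongruenceSubgroup.Gamma0 0).comap (MulAut.conj γρ⁻¹).toMonoidHom

lemma mem_gammaCuspSubgroup : g ∈ gammaCuspSubgroup N γρ ↔ g ∈ GammaCusp N γρ := by
  rw [gammaCuspSubgroup, Subgroup.mem_inf, Subgroup.mem_comap, mem_Gamma0, mem_Gamma0_zero]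
  simp [GammaCusp]

lemma neg_one_mem_GammaCusp (N : ℕ) (γρ : SL2Z) : -1 ∈ GammaCusp N γρ := by
  refine ⟨?_, ?_⟩
  · simp [Gamma0Set, mEntry]
  · rw [mul_neg_one, neg_mul, inv_mul_cancel]
    simp [GammaInfSet, mEntry]

lemma chiOf_eq (χ : DirichletCharacter ℂ N) (hg : g ∈ Gamma0Set N) :
    chiOf χ g = χ (CongruenceSubgroup.Gamma0Map N ⟨g, mem_Gamma0.2 hg⟩) :=
  rfl

lemma chiOf_mul (χ : DirichletCharacter ℂ N) (hg : g ∈ Gamma0Set N) (hh : h ∈ Gamma0Set N) :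
    chiOf χ (g * h) = chiOf χ g * chiOf χ h := by
  rw [chiOf_eq χ hg, chiOf_eq χ hh, ← map_mul, ← map_mul]
  rfl

lemma norm_chiOf (χ : DirichletCharacter ℂ N) (hg : g ∈ Gamma0Set N) : ‖chiOf χ g‖ = 1 := by
  obtain ⟨u, hu⟩ := (Group.isUnit (⟨g, mem_Gamma0.2 hg⟩ : CongruenceSubgroup.Gamma0 N)).map
    (CongruenceSubgroup.Gamma0Map N)
  rw [chiOf_eq χ hg, ← hu, DirichletCharacter.unit_norm_eq_one]

lemma even_of_trivial_on_GammaCusp {k : ℤ} (hχ : χ (-1) = (-1) ^ k)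
    (htriv : ∀ g ∈ GammaCusp N γρ, chiOf χ g = 1) : Even k := by
  have h := htriv _ (neg_one_mem_GammaCusp N γρ)
  have hneg : chiOf χ (-1) = χ (-1) := by simp [chiOf, mEntry]
  by_contra hk
  rw [hneg, hχ, (Int.not_even_iff_odd.1 hk).neg_one_zpow] at h
  norm_num at h

end Level

section CosetReps

lemma tsum_mul_right_cosetReps {G M : Type*} [Group G] [AddCommMonoid M] [TopologicalSpace M]
    {Γ H : Subgroup G} {R : Set G} (hRΓ : R ⊆ Γ)
    (hR : ∀ g ∈ Γ, ∃! r, r ∈ R ∧ ∃ h ∈ H, g = h * r) {f : G → M}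
    (hf : ∀ h ∈ H, ∀ g ∈ Γ, f (h * g) = f g) {γ : G} (hγ : γ ∈ Γ) :
    ∑' r : R, f (r * γ) = ∑' r : R, f r := by
  choose σ hσ using fun r : R => (hR (r * γ) (Γ.mul_mem (hRΓ r.2) hγ)).exists
  have hinj : Function.Injective fun r => (⟨σ r, (hσ r).1⟩ : R) := by
    intro r r' hrr'
    obtain ⟨h, hh, hr⟩ := (hσ r).2
    obtain ⟨h', hh', hr'⟩ := (hσ r').2
    rw [Subtype.mk.injEq] at hrr'
    refine Subtype.ext ((hR r (hRΓ r.2)).unique ⟨r.2, 1, H.one_mem, (one_mul _).symm⟩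
      ⟨r'.2, h * h'⁻¹, H.mul_mem hh (H.inv_mem hh'), ?_⟩)
    rw [← mul_left_inj γ, mul_assoc, hr', hr, hrr']
    group
  have hsurj : Function.Surjective fun r => (⟨σ r, (hσ r).1⟩ : R) := by
    intro s
    obtain ⟨r, hr, h, hh, hs⟩ := (hR (s * γ⁻¹) (Γ.mul_mem (hRΓ s.2) (Γ.inv_mem hγ))).exists
    refine ⟨⟨r, hr⟩, Subtype.ext ((hR (r * γ) (Γ.mul_mem (hRΓ hr) hγ)).unique (hσ ⟨r, hr⟩)
      ⟨s.2, h⁻¹, H.inv_mem hh, ?_⟩)⟩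
    rw [eq_inv_mul_iff_mul_eq, ← mul_assoc, ← hs, inv_mul_cancel_right]
  refine (tsum_congr fun r => ?_).trans ((Equiv.ofBijective _ ⟨hinj, hsurj⟩).tsum_eq (fun r => f r))
  obtain ⟨h, hh, hr⟩ := (hσ r).2
  rw [hr, hf h hh _ (hRΓ (hσ r).1)]
  rfl

namespace IsCosetReps

variable {N : ℕ} {γρ : SL2Z} {R : Set SL2Z}

lemma injective_bottomRow (hR : IsCosetReps N γρ R) (γ : SL2Z) :
    Function.Injective fun r : R => (γρ⁻¹ * (r : SL2Z) * γ) 1 := by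
  intro r r' hrr'
  have hcusp : (r : SL2Z) * (r' : SL2Z)⁻¹ ∈ GammaCusp N γρ := by
    refine ⟨mem_Gamma0.1 (mul_mem (mem_Gamma0.2 (hR.1 r.2)) (inv_mem (mem_Gamma0.2 (hR.1 r'.2)))),
      ?_⟩
    have hinf := mul_inv_mem_GammaInfSet hrr'
    rwa [show γρ⁻¹ * r * γ * (γρ⁻¹ * r' * γ)⁻¹ = γρ⁻¹ * (r * (r' : SL2Z)⁻¹) * γρ by group] at hinf
  exact Subtype.ext ((hR.2 r (hR.1 r.2)).unique
    ⟨r.2, 1, mem_gammaCuspSubgroup.1 (one_mem _), (one_mul _).symm⟩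
    ⟨r'.2, _, hcusp, (inv_mul_cancel_right _ _).symm⟩)

lemma tsum_mul_right (hR : IsCosetReps N γρ R) {f : SL2Z → ℂ}
    (hf : ∀ h ∈ GammaCusp N γρ, ∀ g ∈ Gamma0Set N, f (h * g) = f g) {γ : SL2Z}
    (hγ : γ ∈ Gamma0Set N) : ∑' r : R, f (r * γ) = ∑' r : R, f r := by
  refine tsum_mul_right_cosetReps (Γ := CongruenceSubgroup.Gamma0 N) (H := gammaCuspSubgroup N γρ)
    (fun r hr => mem_Gamma0.2 (hR.1 hr)) ?_ ?_ (mem_Gamma0.2 hγ)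
  · simpa only [mem_Gamma0, mem_gammaCuspSubgroup] using hR.2
  · simpa only [mem_Gamma0, mem_gammaCuspSubgroup] using hf

end IsCosetReps

end CosetReps

section Growth

variable {k : ℤ} {s : ℝ} {x : Fin 2 → ℤ} {z : ℂ}

/-- The majorant `((|m| + 1) (|n| + 1))^(-s)` on `ℤ²`. -/
def gridWeight (s : ℝ) (p : ℤ × ℤ) : ℝ := ((|(p.1 : ℝ)| + 1) * (|(p.2 : ℝ)| + 1)) ^ (-s)

lemma gridWeight_nonneg (s : ℝ) (p : ℤ × ℤ) : 0 ≤ gridWeight s p := by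
  unfold gridWeight
  positivity

lemma summable_gridWeight (hs : 1 < s) : Summable (gridWeight s) := by
  have hone : Summable fun n : ℤ => (|(n : ℝ)| + 1) ^ (-s) := by
    refine (Real.summable_abs_int_rpow hs).of_norm_bounded_eventually ?_
    filter_upwards [(Set.finite_singleton (0 : ℤ)).compl_mem_cofinite] with n hn
    have hn0 : 0 < |(n : ℝ)| := abs_pos.2 (Int.cast_ne_zero.2 hn)
    rw [Real.norm_of_nonneg (by positivity)]
    exact Real.rpow_le_rpow_of_nonpos hn0 (by linarith) (by linarith)
  refine (hone.mul_of_nonneg hone (fun _ => by positivity) (fun _ => by positivity)).congr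
    fun p => ?_
  rw [gridWeight, Real.mul_rpow (by positivity) (by positivity)]

/-- The bijection `(c, d) ↦ (c, d + ⌊c u⌋)` of `ℤ²`. When `u = Re z`, its second coordinate is
within `1` of `Re (c z + d)`, so that bounds in terms of it are uniform in `u`. -/
def floorShear (u : ℝ) (x : Fin 2 → ℤ) : ℤ × ℤ := (x 0, x 1 + ⌊x 0 * u⌋)

lemma floorShear_injective (u : ℝ) : Function.Injective (floorShear u) := by
  intro x y hxy
  obtain ⟨h0, h1⟩ := Prod.mk.inj hxy
  rw [h0, add_left_inj] at h1
  ext i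
  fin_cases i
  exacts [h0, h1]

lemma im_mul_le_six_mul_norm_sq (hx : x 0 ≠ 0) (hz : 1 ≤ z.im) :
    z.im * ((|((floorShear z.re x).1 : ℝ)| + 1) * (|((floorShear z.re x).2 : ℝ)| + 1)) ≤
      6 * ‖(x 0 : ℂ) * z + x 1‖ ^ 2 := by
  set w : ℂ := x 0 * z + x 1 with hw
  have hx1 : 1 ≤ |(x 0 : ℝ)| := by exact_mod_cast Int.one_le_abs hx
  have him : |(x 0 : ℝ)| * z.im ≤ ‖w‖ := by
    have := abs_im_le_norm w
    simpa [hw, abs_mul, abs_of_pos (one_pos.trans_le hz)] using this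
  have hfst : z.im * (|(x 0 : ℝ)| + 1) ≤ 2 * ‖w‖ := by nlinarith
  have hsnd : |((x 1 + ⌊x 0 * z.re⌋ : ℤ) : ℝ)| + 1 ≤ 3 * ‖w‖ := by
    have hre : w.re = x 0 * z.re + x 1 := by simp [hw]
    have hle := Int.floor_le (x 0 * z.re)
    have hlt := Int.lt_floor_add_one (x 0 * z.re)
    have hnear : |((x 1 + ⌊x 0 * z.re⌋ : ℤ) : ℝ)| ≤ |w.re| + 1 := by
      push_cast
      grind
    have := abs_re_le_norm w
    nlinarith
  calc z.im * ((|(x 0 : ℝ)| + 1) * (|((x 1 + ⌊x 0 * z.re⌋ : ℤ) : ℝ)| + 1))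
      = z.im * (|(x 0 : ℝ)| + 1) * (|((x 1 + ⌊x 0 * z.re⌋ : ℤ) : ℝ)| + 1) := by ring
    _ ≤ 2 * ‖w‖ * (3 * ‖w‖) := by gcongr
    _ = 6 * ‖w‖ ^ 2 := by ring

lemma le_six_mul_norm_sq (hx : x ≠ 0) (hx0 : x 0 = 0) (z : ℂ) :
    (|((floorShear z.re x).1 : ℝ)| + 1) * (|((floorShear z.re x).2 : ℝ)| + 1) ≤
      6 * ‖(x 0 : ℂ) * z + x 1‖ ^ 2 := by
  have hx1 : x 1 ≠ 0 := fun h => hx (funext fun i => by fin_cases i; exacts [hx0, h])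
  have hone : 1 ≤ |(x 1 : ℝ)| := by exact_mod_cast Int.one_le_abs hx1
  simp only [floorShear, hx0, Int.cast_zero, zero_mul, Int.floor_zero, abs_zero, zero_add, one_mul,
    add_zero, norm_intCast]
  nlinarith

lemma norm_latticePoint_zpow_le {y : ℝ} (hk : k ≤ 2) (hy : 0 < y)
    (h : y * ((|((floorShear z.re x).1 : ℝ)| + 1) * (|((floorShear z.re x).2 : ℝ)| + 1)) ≤
      6 * ‖(x 0 : ℂ) * z + x 1‖ ^ 2) :
    ‖(x 0 : ℂ) * z + x 1‖ ^ (k - 2) ≤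
      6 ^ (1 - k / 2 : ℝ) * y ^ (-(1 - k / 2 : ℝ)) *
        gridWeight (1 - k / 2) (floorShear z.re x) := by
  set P : ℝ := (|((floorShear z.re x).1 : ℝ)| + 1) * (|((floorShear z.re x).2 : ℝ)| + 1) with hP
  set r : ℝ := ‖(x 0 : ℂ) * z + x 1‖
  have hr : 0 ≤ r := norm_nonneg _
  have hP0 : 0 < P := by positivity
  have hs : -(1 - k / 2 : ℝ) ≤ 0 := by
    have : (k : ℝ) ≤ 2 := by exact_mod_cast hk
    linarith
  calc r ^ (k - 2) = (r ^ 2) ^ (-(1 - k / 2 : ℝ)) := by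
        rw [← Real.rpow_intCast, ← Real.rpow_natCast_mul hr]
        push_cast
        ring_nf
    _ ≤ (6⁻¹ * (y * P)) ^ (-(1 - k / 2 : ℝ)) :=
        Real.rpow_le_rpow_of_nonpos (by positivity) (by linarith) hs
    _ = 6 ^ (1 - k / 2 : ℝ) * y ^ (-(1 - k / 2 : ℝ)) *
          gridWeight (1 - k / 2) (floorShear z.re x) := by
        rw [Real.mul_rpow (by positivity) (by positivity), Real.mul_rpow hy.le hP0.le,
          Real.inv_rpow (by positivity), Real.rpow_neg (by positivity), inv_inv, gridWeight, ← hP,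
          mul_assoc]

/-- The constant in the growth estimate for `harmonicLift k`. -/
def growthConst (k : ℤ) : ℝ := 6 ^ (1 - k / 2 : ℝ) * ∑' p, gridWeight (1 - k / 2) p

lemma growthConst_nonneg (k : ℤ) : 0 ≤ growthConst k :=
  mul_nonneg (by positivity) (tsum_nonneg (gridWeight_nonneg _))

lemma im_rpow_mul_norm_latticeTerm_le {δ : ℝ} (hk : k ≤ 2) (hx : x ≠ 0) (hδ : 0 ≤ δ)
    (hxδ : x 0 = 0 → 1 ≤ δ) (hz : 1 ≤ z.im) :
    z.im ^ ((1 - k : ℤ) : ℝ) * ‖latticeTerm x (-1) (k - 1) z‖ ≤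
      (δ * z.im ^ ((1 - k : ℤ) : ℝ) + z.im ^ (-(k : ℝ) / 2)) *
        (6 ^ (1 - k / 2 : ℝ) * gridWeight (1 - k / 2) (floorShear z.re x)) := by
  have hz0 : 0 < z.im := one_pos.trans_le hz
  have hW : 0 ≤ 6 ^ (1 - k / 2 : ℝ) * gridWeight (1 - k / 2) (floorShear z.re x) :=
    mul_nonneg (by positivity) (gridWeight_nonneg _ _)
  rw [norm_latticeTerm hx hz0, show -1 + (k - 1) = k - 2 by ring]
  by_cases hx0 : x 0 = 0
  · have hterm := norm_latticePoint_zpow_le hk one_pos ((one_mul _).trans_le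
      (le_six_mul_norm_sq hx hx0 z))
    rw [Real.one_rpow, mul_one] at hterm
    refine mul_le_mul ?_ hterm (by positivity) (by positivity)
    have hle := le_mul_of_one_le_left (Real.rpow_nonneg hz0.le ((1 - k : ℤ) : ℝ)) (hxδ hx0)
    exact hle.trans (le_add_of_nonneg_right (by positivity))
  · have hterm := norm_latticePoint_zpow_le hk hz0 (im_mul_le_six_mul_norm_sq hx0 hz)
    have hexp : z.im ^ ((1 - k : ℤ) : ℝ) * z.im ^ (-(1 - k / 2 : ℝ)) = z.im ^ (-(k : ℝ) / 2) := by
      rw [← Real.rpow_add hz0]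
      push_cast
      ring_nf
    calc _ ≤ z.im ^ ((1 - k : ℤ) : ℝ) * (6 ^ (1 - k / 2 : ℝ) * z.im ^ (-(1 - k / 2 : ℝ)) *
              gridWeight (1 - k / 2) (floorShear z.re x)) := by gcongr
      _ = z.im ^ (-(k : ℝ) / 2) *
            (6 ^ (1 - k / 2 : ℝ) * gridWeight (1 - k / 2) (floorShear z.re x)) := by
          rw [← hexp]; ring
      _ ≤ _ := by gcongr; exact le_add_of_nonneg_left (by positivity)

lemma norm_harmonicLift_le {ι : Type*} {x : ι → Fin 2 → ℤ} {a : ι → ℂ} {δ : ℝ} (hk : k < 0)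
    (hinj : Function.Injective x) (hx : ∀ i, x i ≠ 0) (ha : ∀ i, ‖a i‖ ≤ 1) (hδ : 0 ≤ δ)
    (hxδ : ∀ i, x i 0 = 0 → 1 ≤ δ) (hz : 1 ≤ z.im) :
    ‖harmonicLift k x a z‖ ≤
      growthConst k * (δ * z.im ^ ((1 - k : ℤ) : ℝ) + z.im ^ (-(k : ℝ) / 2)) := by
  have hz0 : 0 < z.im := one_pos.trans_le hz
  have hk' : (k : ℝ) < 0 := by exact_mod_cast hk
  set B : ℝ := δ * z.im ^ ((1 - k : ℤ) : ℝ) + z.im ^ (-(k : ℝ) / 2)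
  have : 0 ≤ B := by positivity
  have hgrid : Summable (gridWeight (1 - k / 2)) := summable_gridWeight (by linarith)
  have hshear : Function.Injective fun i => floorShear z.re (x i) :=
    (floorShear_injective _).comp hinj
  have hsum : Summable fun i => B * (6 ^ (1 - k / 2 : ℝ) *
      gridWeight (1 - k / 2) (floorShear z.re (x i))) :=
    ((hgrid.comp_injective hshear).mul_left _).mul_left B
  have hcoef : ‖(z.im : ℂ) ^ (1 - k) / (1 - k)‖ ≤ z.im ^ ((1 - k : ℤ) : ℝ) := by
    have hone : 1 ≤ ‖(1 - k : ℂ)‖ := by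
      rw [show (1 : ℂ) - k = ((1 - k : ℤ) : ℂ) by push_cast; rfl, norm_intCast]
      exact_mod_cast Int.one_le_abs (by lia)
    rw [norm_div, norm_zpow, norm_real, Real.norm_of_nonneg hz0.le, Real.rpow_intCast]
    exact div_le_self (by positivity) hone
  rw [harmonicLift, latticeSeries, ← tsum_mul_left]
  calc _ ≤ ∑' i, B * (6 ^ (1 - k / 2 : ℝ) *
          gridWeight (1 - k / 2) (floorShear z.re (x i))) := by
        refine tsum_of_norm_bounded hsum.hasSum fun i => ?_
        refine le_trans ?_ (im_rpow_mul_norm_latticeTerm_le (by lia) (hx i) hδ (hxδ i) hz)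
        rw [norm_mul, norm_mul]
        gcongr
        exact mul_le_of_le_one_left (norm_nonneg _) (ha i)
    _ = B * (6 ^ (1 - k / 2 : ℝ) * ∑' i, gridWeight (1 - k / 2) (floorShear z.re (x i))) := by
        rw [tsum_mul_left, tsum_mul_left]
    _ ≤ B * growthConst k := by
        rw [growthConst]
        gcongr
        exact tsum_comp_le_tsum_of_inj hgrid (gridWeight_nonneg _) hshear
    _ = growthConst k * B := mul_comm _ _

end Growth

section CuspGrowth

variable {k : ℤ} {f : ℂ → ℂ}

lemma slash_eq_slashM {a b c d : ℤ} (hdet : a * d - b * c = 1) (k : ℤ) (f : ℂ → ℂ) :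
    slash k a b c d f = slashM k ⟨!![a, b; c, d], by rw [Matrix.det_fin_two_of, hdet]⟩ f :=
  rfl

lemma polyGrowthAtCusps_of_slashM {A C v₀ : ℝ}
    (h : ∀ γ, ∀ z ∈ UHP, v₀ ≤ z.im → ‖slashM k γ f z‖ ≤ C * z.im ^ A) : PolyGrowthAtCusps k f := by
  intro a b c d hdet
  rw [slash_eq_slashM hdet]
  exact ⟨A, C, v₀, h _⟩

lemma PolyGrowthAtCusps.expGrowthAtCusps (h : PolyGrowthAtCusps k f) : ExpGrowthAtCusps k f := by
  intro a b c d hdet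
  obtain ⟨A, C, v₀, hC⟩ := h a b c d hdet
  have hexp : ∀ᶠ v : ℝ in atTop, ‖v ^ A‖ ≤ 1 * ‖Real.exp (1 * v)‖ :=
    (isLittleO_rpow_exp_pos_mul_atTop A one_pos).bound one_pos
  obtain ⟨v₁, hv₁⟩ := eventually_atTop.1 hexp
  refine ⟨1, one_pos, |C|, max v₀ v₁, fun τ hτ hv => ?_⟩
  have hpow := hv₁ τ.im ((le_max_right _ _).trans hv)
  rw [one_mul, Real.norm_of_nonneg (Real.rpow_nonneg (le_of_lt hτ) _),
    Real.norm_of_nonneg (Real.exp_nonneg _)] at hpow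
  calc _ ≤ C * τ.im ^ A := hC τ hτ ((le_max_left _ _).trans hv)
    _ ≤ |C| * τ.im ^ A := by gcongr; exacts [Real.rpow_nonneg (le_of_lt hτ) _, le_abs_self C]
    _ ≤ |C| * Real.exp (1 * τ.im) := by gcongr

end CuspGrowth

section FEis

variable {k : ℤ} {N : ℕ} {χ : DirichletCharacter ℂ N} {γρ γ : SL2Z} {R : Set SL2Z} {z : ℂ}

lemma slashM_FEis_eq_tsum (k : ℤ) (χ : DirichletCharacter ℂ N) (γρ : SL2Z) (R : Set SL2Z)
    (γ : SL2Z) (τ : ℍ) :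
    slashM k γ (FEis k N χ γρ R) τ =
      ∑' r : R, conj (chiOf χ r) * slashM k (γρ⁻¹ * r * γ) (imPowSeed k) τ := by
  rw [slashM_apply, FEis, ← tsum_mul_left]
  refine tsum_congr fun r => ?_
  rw [slashM_mul k (γρ⁻¹ * r) γ, slashM_apply k γ, mul_left_comm]
  rfl

lemma slashM_FEis_eq_harmonicLift (k : ℤ) (χ : DirichletCharacter ℂ N) (γρ : SL2Z) (R : Set SL2Z)
    (γ : SL2Z) (hz : z ∈ UHP) :
    slashM k γ (FEis k N χ γρ R) z =
      harmonicLift k (fun r : R => (γρ⁻¹ * r * γ) 1) (fun r => conj (chiOf χ r)) z := by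
  lift z to ℍ using hz
  rw [slashM_FEis_eq_tsum, harmonicLift, latticeSeries, ← tsum_mul_left]
  refine tsum_congr fun r => ?_
  rw [slashM_imPowSeed, UpperHalfPlane.coe_im]
  ring

lemma eqOn_FEis_harmonicLift (k : ℤ) (χ : DirichletCharacter ℂ N) (γρ : SL2Z) (R : Set SL2Z) :
    EqOn (FEis k N χ γρ R)
      (harmonicLift k (fun r : R => (γρ⁻¹ * r) 1) fun r => conj (chiOf χ r)) UHP := by
  intro z hz
  have h := slashM_FEis_eq_harmonicLift k χ γρ R 1 hz
  lift z to ℍ using hz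
  simpa only [slashM_one, mul_one] using h

lemma slashM_FEis_of_mem_Gamma0Set (hk : Even k) (htriv : ∀ g ∈ GammaCusp N γρ, chiOf χ g = 1)
    (hR : IsCosetReps N γρ R) (hγ : γ ∈ Gamma0Set N) (τ : ℍ) :
    slashM k γ (FEis k N χ γρ R) τ = chiOf χ γ * FEis k N χ γρ R τ := by
  set F : SL2Z → ℂ := fun g => conj (chiOf χ g) * slashM k (γρ⁻¹ * g) (imPowSeed k) τ with hF
  have hinv : ∀ h ∈ GammaCusp N γρ, ∀ g ∈ Gamma0Set N, F (h * g) = F g := by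
    intro h hh g hg
    simp only [hF]
    rw [chiOf_mul χ hh.1 hg, htriv h hh, one_mul,
      show γρ⁻¹ * (h * g) = γρ⁻¹ * h * γρ * (γρ⁻¹ * g) by group, slashM_mul, slashM_apply,
      slashM_imPowSeed_of_mem_GammaInfSet hk hh.2, ← slashM_apply]
  have hunit : chiOf χ γ * conj (chiOf χ γ) = 1 := by
    rw [mul_conj', norm_chiOf χ hγ, ofReal_one, one_pow]
  calc slashM k γ (FEis k N χ γρ R) τ
      = ∑' r : R, chiOf χ γ * F (r * γ) := by
        rw [slashM_FEis_eq_tsum]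
        refine tsum_congr fun r => ?_
        simp only [hF]
        rw [chiOf_mul χ (hR.1 r.2) hγ, map_mul, mul_assoc γρ⁻¹]
        linear_combination
          (-conj (chiOf χ r) * slashM k (γρ⁻¹ * (r * γ)) (imPowSeed k) τ) * hunit
    _ = chiOf χ γ * ∑' r : R, F r := by rw [tsum_mul_left, hR.tsum_mul_right hinv hγ]

lemma slashInv_FEis (hk : Even k) (htriv : ∀ g ∈ GammaCusp N γρ, chiOf χ g = 1)
    (hR : IsCosetReps N γρ R) : SlashInv k N χ (FEis k N χ γρ R) := by
  intro a b c d hdet hc τ hτ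
  rw [slash_eq_slashM hdet]
  exact slashM_FEis_of_mem_Gamma0Set (γ := ⟨!![a, b; c, d], _⟩) hk htriv hR hc ⟨τ, hτ⟩

namespace IsCosetReps

lemma norm_conj_chiOf_le (hR : IsCosetReps N γρ R) (χ : DirichletCharacter ℂ N) (r : R) :
    ‖conj (chiOf χ r)‖ ≤ 1 := by
  rw [RCLike.norm_conj, norm_chiOf χ (hR.1 r.2)]

lemma isLatticeSummable {n : ℤ} (hR : IsCosetReps N γρ R) (χ : DirichletCharacter ℂ N)
    (hn : n < -2) :
    IsLatticeSummable (fun r : R => (γρ⁻¹ * r) 1) (fun r => conj (chiOf χ r)) n := by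
  refine .of_injective ?_ (fun r => Matrix.SpecialLinearGroup.row_ne_zero _ 1)
    (hR.norm_conj_chiOf_le χ) hn
  simpa only [mul_one] using hR.injective_bottomRow 1

lemma summable_norm_slashM_imPowSeed (hR : IsCosetReps N γρ R) (χ : DirichletCharacter ℂ N)
    (hk : k < 0) (hz : z ∈ UHP) :
    Summable fun r : R => ‖conj (chiOf χ r) * slashM k (γρ⁻¹ * r) (imPowSeed k) z‖ := by
  have hsum := ((hR.isLatticeSummable χ (by lia : -1 + (k - 1) < -2)).summable_norm hz).mul_left
    ‖(z.im : ℂ) ^ (1 - k) / (1 - k)‖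
  refine hsum.congr fun r => ?_
  have hseed := slashM_imPowSeed k (γρ⁻¹ * r) ⟨z, hz⟩
  rw [← norm_mul, mul_left_comm]
  exact congrArg (fun w => ‖conj (chiOf χ r) * w‖) hseed.symm

lemma contDiffOn_FEis (hR : IsCosetReps N γρ R) (χ : DirichletCharacter ℂ N) (hk : k < 0) :
    ContDiffOn ℝ (⊤ : ℕ∞) (FEis k N χ γρ R) UHP :=
  (hR.isLatticeSummable χ (by lia)).contDiffOn_harmonicLift.congr
    (eqOn_FEis_harmonicLift k χ γρ R)

lemma hypLaplacian_FEis (hR : IsCosetReps N γρ R) (χ : DirichletCharacter ℂ N) (hk : k < 0)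
    (hz : z ∈ UHP) : hypLaplacian k (FEis k N χ γρ R) z = 0 := by
  rw [hypLaplacian_congr_of_eventuallyEq k
    ((eqOn_FEis_harmonicLift k χ γρ R).eventuallyEq_of_mem (isOpen_UHP.mem_nhds hz))]
  exact (hR.isLatticeSummable χ (by lia)).hypLaplacian_harmonicLift (by lia) hz

lemma xiOp_FEis (hR : IsCosetReps N γρ R) (χ : DirichletCharacter ℂ N) (hk : k < 0)
    (hz : z ∈ UHP) : xiOp k (FEis k N χ γρ R) z = EisSeries k N (conjChar χ) γρ R z := by
  rw [xiOp, wirtBar_congr_of_eventuallyEq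
    ((eqOn_FEis_harmonicLift k χ γρ R).eventuallyEq_of_mem (isOpen_UHP.mem_nhds hz)), ← xiOp,
    (hR.isLatticeSummable χ (by lia)).xiOp_harmonicLift (by lia) hz]
  rfl

lemma norm_slashM_FEis_le {δ : ℝ} (hR : IsCosetReps N γρ R) (χ : DirichletCharacter ℂ N)
    (hk : k < 0) (γ : SL2Z) (hδ : 0 ≤ δ) (hγδ : CuspEquiv N γ γρ → 1 ≤ δ) (hz : 1 ≤ z.im) :
    ‖slashM k γ (FEis k N χ γρ R) z‖ ≤
      growthConst k * (δ * z.im ^ ((1 - k : ℤ) : ℝ) + z.im ^ (-(k : ℝ) / 2)) := by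
  rw [slashM_FEis_eq_harmonicLift k χ γρ R γ (one_pos.trans_le hz : z ∈ UHP)]
  refine norm_harmonicLift_le hk (hR.injective_bottomRow γ)
    (fun r => Matrix.SpecialLinearGroup.row_ne_zero _ 1) (hR.norm_conj_chiOf_le χ) hδ
    (fun r hr => hγδ ⟨(r : SL2Z)⁻¹, ?_, γρ⁻¹ * r * γ, hr, by group⟩) hz
  exact mem_Gamma0.1 (inv_mem (mem_Gamma0.2 (hR.1 r.2)))

lemma polyGrowthAtCusps_FEis (hR : IsCosetReps N γρ R) (χ : DirichletCharacter ℂ N)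
    (hk : k < 0) : PolyGrowthAtCusps k (FEis k N χ γρ R) := by
  refine polyGrowthAtCusps_of_slashM (A := (1 - k : ℤ)) (C := growthConst k * 2) (v₀ := 1)
    fun γ z _ hz => (hR.norm_slashM_FEis_le χ hk γ zero_le_one (fun _ => le_rfl) hz).trans ?_
  have hk' : (k : ℝ) < 0 := by exact_mod_cast hk
  have hpow : z.im ^ (-(k : ℝ) / 2) ≤ z.im ^ ((1 - k : ℤ) : ℝ) :=
    Real.rpow_le_rpow_of_exponent_le hz (by push_cast; linarith)
  rw [mul_assoc]
  gcongr
  · exact growthConst_nonneg k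
  · linarith

lemma isHarmonicMaassMG_FEis (hR : IsCosetReps N γρ R) (hk : k < 0) (hχ : χ (-1) = (-1) ^ k)
    (htriv : ∀ g ∈ GammaCusp N γρ, chiOf χ g = 1) : IsHarmonicMaassMG k N χ (FEis k N χ γρ R) :=
  ⟨hR.contDiffOn_FEis χ hk, slashInv_FEis (even_of_trivial_on_GammaCusp hχ htriv) htriv hR,
    fun _ hz => hR.hypLaplacian_FEis χ hk hz, (hR.polyGrowthAtCusps_FEis χ hk).expGrowthAtCusps⟩

end IsCosetReps

end FEis

/-- **Construction of harmonic Maass forms of polynomial growth with Eisenstein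
shadow** (Theorem 3.3): the series `𝓕_{k,ρ}(N,χ;τ)` converges absolutely, lies in
`H^!_k(N,χ)`, satisfies the growth estimate
`(𝓕|_k γ_ν)(τ) = O(δ_{ρ,ν} v^{1-k} + v^{-k/2})` at each cusp, hence lies in
`H^#_k(N,χ)`, and its shadow is the Eisenstein series `E_{2-k,ρ}(N,χ̄;·)`. -/
theorem eisenstein_preimage_construction
    (k : ℤ) (hk : k < 0) (N : ℕ) (hN : 1 ≤ N)
    (χ : DirichletCharacter ℂ N) (hχ : χ (-1) = (-1) ^ k)
    (γρ : SL2Z) (htriv : ∀ g ∈ GammaCusp N γρ, chiOf χ g = 1)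
    (R : Set SL2Z) (hR : IsCosetReps N γρ R) :
    (∀ τ ∈ UHP, Summable (fun r : R => ‖(starRingEnd ℂ) (chiOf χ (r : SL2Z)) *
        slashM k (γρ⁻¹ * (r : SL2Z))
          (fun z => (z.im : ℂ) ^ (1 - k) / ((1 : ℂ) - (k : ℂ))) τ‖)) ∧
    IsHarmonicMaassMG k N χ (FEis k N χ γρ R) ∧
    (∀ γν : SL2Z, ∀ δ : ℝ,
      ((CuspEquiv N γν γρ → δ = 1) ∧ (¬ CuspEquiv N γν γρ → δ = 0)) →
      ∃ C v₀ : ℝ, ∀ τ ∈ UHP, v₀ ≤ τ.im →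
        ‖slashM k γν (FEis k N χ γρ R) τ‖ ≤
          C * (δ * τ.im ^ ((1 - k : ℤ) : ℝ) + τ.im ^ (-(k : ℝ) / 2))) ∧
    IsHMFPolyGrowth k N χ (FEis k N χ γρ R) ∧
    (∀ τ ∈ UHP, xiOp k (FEis k N χ γρ R) τ = EisSeries k N (conjChar χ) γρ R τ) := by
  have hMG := hR.isHarmonicMaassMG_FEis hk hχ htriv
  refine ⟨fun τ hτ => hR.summable_norm_slashM_imPowSeed χ hk hτ, hMG, fun γν δ hδ => ?_,
    ⟨hMG, hR.polyGrowthAtCusps_FEis χ hk⟩, fun τ hτ => hR.xiOp_FEis χ hk hτ⟩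
  have hδ0 : 0 ≤ δ := by
    by_cases hν : CuspEquiv N γν γρ
    · exact (hδ.1 hν).symm ▸ zero_le_one
    · exact (hδ.2 hν).ge
  exact ⟨growthConst k, 1, fun τ _ hτ =>
    hR.norm_slashM_FEis_le χ hk γν hδ0 (fun hν => (hδ.1 hν).ge) hτ⟩
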